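/- Let m ≥ 1 and let Ω be a body in ℝ^m whose interior contains the origin. Then the following two conditions together hold — (i) ∫_Ω |y|^{α−m−2} y dy = 0 for every real α > 1, and (ii) ∫_{Ωᶜ} |y|^{α−m−2} y dy = 0 for every real α < 0 (where Ωᶜ is the complement of Ω) — if and only if Ω satisfies the balance law at the origin. (For α > 1 the gradient of V_Ω^{(α)} at an interior point is a nonzero multiple of the integral in (i), and for α < 0 it is a nonzero multiple of the integral in (ii), so this says the origin is a critical point of V_Ω^{(α)} for every α ∉ [0,1] if and only if Ω satisfies the balance law at the origin.) -/

import Mathlib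

open MeasureTheory Metric Set

noncomputable section

/-- A body in `ℝ^m`: the closure of a bounded open set. -/
def IsBody {m : ℕ} (Ω : Set (EuclideanSpace ℝ (Fin m))) : Prop :=
  ∃ U : Set (EuclideanSpace ℝ (Fin m)),
    IsOpen U ∧ Bornology.IsBounded U ∧ Ω = closure U

/-- `Ω` satisfies the balance law at the origin: for almost every `r ≥ 0`, the
vector-valued integral of `χ_Ω(r v) • v` over the unit sphere (with respect to the
surface, i.e. `(m-1)`-dimensional Hausdorff, measure) vanishes. -/
def SatisfiesBalanceLaw {m : ℕ} (Ω : Set (EuclideanSpace ℝ (Fin m))) : Prop :=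
  ∀ᵐ r ∂(volume.restrict (Ici (0 : ℝ))),
    (∫ v in sphere (0 : EuclideanSpace ℝ (Fin m)) 1,
      (Ω.indicator (fun _ => (1 : ℝ)) (r • v)) • v ∂(μH[(m : ℝ) - 1])) = 0

/-!
Let `Φ r` be the first moment of the part of the sphere of radius `r` that lies in `Ω`. Up to the
normalisation of the surface measure, the balance law says that `Φ` vanishes almost everywhere. The
normalisation is harmless: the double integral of `exp (i r ⟪u, v⟫)` against two finite
rotation-invariant measures on the sphere computes the characteristic function of either of them,
up to the mass of the other, so the two measures are proportional.

In polar coordinates the integral over `Ω` becomes `∫ r ^ (α - 2) • Φ r`. Rotation-invariant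
measures have barycentre zero, so the moment of `Ωᶜ` is `-Φ`, and the integral over `Ωᶜ` becomes
`-∫ r ^ (α - 2) • Φ r`. As `Ω` is bounded and contains a ball `ball 0 ε`, the function `Φ` is
supported in some `[ε, R]`. The exponents `α = n + 2` give all moments of `Φ` in `r`, the exponents
`α = -n - 1` all moments of `r ^ (-3) • Φ r` in `r⁻¹`, and by Weierstrass' approximation theorem
either sequence determines `Φ` almost everywhere.
-/

section UniformOnSphere

open Complex Module

variable {E : Type*} [NormedAddCommGroup E] [InnerProductSpace ℝ E] [MeasurableSpace E]

/-- `σ` is concentrated on the unit sphere of `E` and invariant under all linear isometries of `E`.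
Measures on the sphere are encoded as measures on the ambient space, so that Hausdorff measures and
push-forwards from the subtype can be compared directly. -/
structure IsUniformOnSphere (σ : Measure E) : Prop where
  map_eq (R : E ≃ₗᵢ[ℝ] E) : σ.map R = σ
  ae_norm_eq_one : ∀ᵐ v ∂σ, ‖v‖ = 1

variable [BorelSpace E]

lemma integral_map_linearIsometryEquiv {F : Type*} [NormedAddCommGroup F] [NormedSpace ℝ F]
    (σ : Measure E) (R : E ≃ₗᵢ[ℝ] E) (f : E → F) : ∫ v, f v ∂σ.map R = ∫ v, f (R v) ∂σ :=
  R.toHomeomorph.measurableEmbedding.integral_map f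

lemma charFun_map_linearIsometryEquiv (σ : Measure E) (R : E ≃ₗᵢ[ℝ] E) (t : E) :
    charFun (σ.map R) (R t) = charFun σ t := by
  simp only [charFun_apply, integral_map_linearIsometryEquiv, R.inner_map_map]

lemma integral_charFun_smul_comm [SecondCountableTopology E] (σ τ : Measure E)
    [IsFiniteMeasure σ] [IsFiniteMeasure τ] (r : ℝ) :
    ∫ u, charFun σ (r • u) ∂τ = ∫ x, charFun τ (r • x) ∂σ := by
  have hint : Integrable (Function.uncurry fun u x : E ↦ cexp ((r * inner ℝ x u : ℝ) * I))
      (τ.prod σ) := by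
    refine .of_bound (C := 1) ?_ (.of_forall fun p ↦ (norm_exp_ofReal_mul_I _).le)
    exact Continuous.aestronglyMeasurable (by unfold Function.uncurry; fun_prop)
  simp only [charFun_apply, inner_smul_right]
  rw [integral_integral_swap hint]
  simp only [real_inner_comm]

namespace IsUniformOnSphere

variable {σ τ : Measure E}

lemma charFun_eq_of_norm_eq (hσ : IsUniformOnSphere σ) {s t : E} (h : ‖s‖ = ‖t‖) :
    charFun σ s = charFun σ t := by
  rw [← charFun_map_linearIsometryEquiv σ (Submodule.span ℝ {s - t})ᗮ.reflection,
    hσ.map_eq, Submodule.reflection_sub h]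

lemma integral_charFun_norm_smul (hσ : IsUniformOnSphere σ) (hτ : IsUniformOnSphere τ) (t : E) :
    ∫ u, charFun σ (‖t‖ • u) ∂τ = τ.real univ • charFun σ t := by
  rw [← integral_const]
  refine integral_congr_ae ?_
  filter_upwards [hτ.ae_norm_eq_one] with u hu
  exact hσ.charFun_eq_of_norm_eq (by simp [norm_smul, hu])

lemma integral_id_eq_zero (hσ : IsUniformOnSphere σ) : ∫ v, v ∂σ = 0 := by
  have h : ∫ v, v ∂σ = -∫ v, v ∂σ := by
    conv_lhs => rw [← hσ.map_eq (LinearIsometryEquiv.neg ℝ), integral_map_linearIsometryEquiv]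
    exact integral_neg _
  have := IsAddTorsionFree.of_isTorsionFree ℝ E
  exact self_eq_neg.mp h

variable [IsFiniteMeasure σ] [IsFiniteMeasure τ]

lemma measure_univ_smul_eq [CompleteSpace E] [SecondCountableTopology E]
    (hσ : IsUniformOnSphere σ) (hτ : IsUniformOnSphere τ) :
    (τ univ).toNNReal • σ = (σ univ).toNNReal • τ := by
  refine Measure.ext_of_charFun (funext fun t ↦ ?_)
  have h : τ.real univ • charFun σ t = σ.real univ • charFun τ t := by
    rw [← hσ.integral_charFun_norm_smul hτ, ← hτ.integral_charFun_norm_smul hσ,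
      integral_charFun_smul_comm]
  simp only [charFun_apply] at h ⊢
  rw [integral_smul_nnreal_measure, integral_smul_nnreal_measure]
  exact h

lemma integral_eq_zero_iff [CompleteSpace E] [SecondCountableTopology E]
    {F : Type*} [NormedAddCommGroup F] [NormedSpace ℝ F]
    (hσ : IsUniformOnSphere σ) (hτ : IsUniformOnSphere τ) (hσ₀ : σ ≠ 0) (hτ₀ : τ ≠ 0)
    (f : E → F) : ∫ v, f v ∂σ = 0 ↔ ∫ v, f v ∂τ = 0 := by
  have h : (τ univ).toNNReal • ∫ v, f v ∂σ = (σ univ).toNNReal • ∫ v, f v ∂τ := by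
    rw [← integral_smul_nnreal_measure, hσ.measure_univ_smul_eq hτ, integral_smul_nnreal_measure]
  have toNNReal_ne_zero {ρ : Measure E} [IsFiniteMeasure ρ] (hρ : ρ ≠ 0) :
      (ρ univ).toNNReal ≠ 0 := by
    simpa [ENNReal.toNNReal_eq_zero_iff] using hρ
  rw [← smul_eq_zero_iff_right (toNNReal_ne_zero hτ₀), h,
    smul_eq_zero_iff_right (toNNReal_ne_zero hσ₀)]

end IsUniformOnSphere

end UniformOnSphere

section SphereMeasures

open Module

variable {E : Type*} [NormedAddCommGroup E] [InnerProductSpace ℝ E]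

lemma ball_subset_orthogonalProjectionOnto_image_sphere {v : E} (hv : ‖v‖ = 1) :
    ball 0 1 ⊆ (Submodule.span ℝ {v})ᗮ.orthogonalProjectionOnto '' sphere 0 1 := by
  intro w hw
  have hw : ‖w‖ ≤ 1 := (mem_ball_zero_iff.mp hw).le
  have horth : inner ℝ (w : E) v = 0 := Submodule.mem_orthogonal_singleton_iff_inner_left.mp w.2
  refine ⟨w + √(1 - ‖w‖ ^ 2) • v, ?_, ?_⟩
  · rw [mem_sphere_zero_iff_norm, ← sq_eq_sq₀ (norm_nonneg _) zero_le_one, norm_add_sq_real,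
      inner_smul_right, horth, norm_smul, hv, mul_one, Real.norm_eq_abs, sq_abs,
      Real.sq_sqrt (sub_nonneg.mpr (pow_le_one₀ (norm_nonneg _) hw)), Submodule.coe_norm]
    ring
  · rw [map_add, map_smul, Submodule.orthogonalProjectionOnto_mem_subspace_eq_self,
      Submodule.orthogonalProjectionOnto_orthogonalComplement_singleton_eq_zero, smul_zero,
      add_zero]

lemma hemisphere_subset_stereoInvFunAux_image_closedBall {v : E} (hv : ‖v‖ = 1) :
    sphere 0 1 ∩ {x | inner ℝ v x ≤ 0} ⊆
      (fun w : (Submodule.span ℝ {v})ᗮ ↦ stereoInvFunAux v w) '' closedBall 0 2 := by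
  rintro x ⟨hx, hvx : inner ℝ v x ≤ 0⟩
  have hxv : x ≠ v := by
    rintro rfl
    rw [real_inner_self_eq_norm_sq, hv] at hvx
    norm_num at hvx
  refine ⟨stereoToFun v x, ?_, congrArg Subtype.val (stereo_left_inv hv (x := ⟨x, hx⟩) hxv)⟩
  have hproj : ‖(Submodule.span ℝ {v})ᗮ.orthogonalProjectionOnto x‖ ≤ 1 :=
    (Submodule.norm_orthogonalProjectionOnto_apply_le _ _).trans_eq (mem_sphere_zero_iff_norm.mp hx)
  have hscale : ‖2 / (1 - innerSL ℝ v x)‖ ≤ 2 := by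
    rw [innerSL_apply_apply, Real.norm_of_nonneg (div_nonneg zero_le_two (by linarith))]
    exact div_le_self zero_le_two (by linarith)
  rw [mem_closedBall_zero_iff, stereoToFun_apply, norm_smul]
  exact (mul_le_mul hscale hproj (norm_nonneg _) zero_le_two).trans_eq (mul_one 2)

lemma finrank_sub_one_nonneg [FiniteDimensional ℝ E] [Nontrivial E] :
    (0 : ℝ) ≤ finrank ℝ E - 1 := by
  rw [sub_nonneg, Nat.one_le_cast]
  exact finrank_pos

variable [MeasurableSpace E] [BorelSpace E]

variable (E) in
/-- The surface measure of the unit sphere as Hausdorff measure of codimension one, as a measure on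
`E`. -/
def surfaceMeasure : Measure E :=
  μH[(finrank ℝ E : ℝ) - 1].restrict (sphere 0 1)

lemma isUniformOnSphere_surfaceMeasure : IsUniformOnSphere (surfaceMeasure E) where
  map_eq R := by
    have h := (R.toIsometryEquiv.measurePreserving_hausdorffMeasure
      (finrank ℝ E - 1 : ℝ)).restrict_preimage_emb R.toHomeomorph.measurableEmbedding (sphere 0 1)
    rw [R.coe_toIsometryEquiv, R.preimage_sphere, map_zero] at h
    exact h.map_eq
  ae_norm_eq_one := by
    filter_upwards [ae_restrict_mem isClosed_sphere.measurableSet] with v hv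
    exact mem_sphere_zero_iff_norm.mp hv

variable [FiniteDimensional ℝ E]

variable (E) in
/-- The surface measure of the unit sphere that appears in polar coordinates, as a measure on `E`:
the cone over `A ∩ sphere 0 1` with apex `0` has volume `coneMeasure E A / finrank ℝ E`. -/
def coneMeasure : Measure E :=
  (volume : Measure E).toSphere.map (↑)

instance : IsFiniteMeasure (coneMeasure E) := by
  unfold coneMeasure
  infer_instance

variable (E) in
lemma coneMeasure_ne_zero [Nontrivial E] : coneMeasure E ≠ 0 :=
  mt (Measure.map_eq_zero_iff measurable_subtype_coe.aemeasurable).mp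
    (Measure.toSphere_ne_zero _)

lemma integral_coneMeasure {F : Type*} [NormedAddCommGroup F] [NormedSpace ℝ F] (f : E → F) :
    ∫ v, f v ∂coneMeasure E = ∫ v : sphere (0 : E) 1, f v ∂(volume : Measure E).toSphere :=
  (MeasurableEmbedding.subtype_coe isClosed_sphere.measurableSet).integral_map f

open scoped Pointwise in
lemma coneMeasure_apply {A : Set E} (hA : MeasurableSet A) :
    coneMeasure E A = finrank ℝ E * volume (Ioo (0 : ℝ) 1 • (sphere 0 1 ∩ A)) := by
  rw [coneMeasure, Measure.map_apply measurable_subtype_coe hA,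
    Measure.toSphere_apply' _ (measurable_subtype_coe hA), Subtype.image_preimage_coe]

open scoped Pointwise in
lemma isUniformOnSphere_coneMeasure : IsUniformOnSphere (coneMeasure E) where
  map_eq R := by
    ext A hA
    have hcone : Ioo (0 : ℝ) 1 • (sphere 0 1 ∩ R ⁻¹' A) =
        R ⁻¹' (Ioo (0 : ℝ) 1 • (sphere 0 1 ∩ A)) := by
      have preimage_eq (S : Set E) : R ⁻¹' S = R.symm '' S :=
        (R.symm.image_eq_preimage_symm S).symm
      rw [preimage_eq, preimage_eq, ← image2_smul, ← image2_smul,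
        image_image2_distrib_right fun c x ↦ map_smul R.symm c x,
        image_inter R.symm.injective, R.symm.image_sphere, map_zero]
    rw [Measure.map_apply R.continuous.measurable hA,
      coneMeasure_apply (R.continuous.measurable hA), coneMeasure_apply hA, hcone,
      R.measurePreserving.measure_preimage_emb R.toHomeomorph.measurableEmbedding]
  ae_norm_eq_one := by
    rw [coneMeasure, ae_map_iff measurable_subtype_coe.aemeasurable
      (measurableSet_eq_fun (by fun_prop) (by fun_prop))]
    exact .of_forall fun v ↦ norm_eq_of_mem_sphere v

lemma isAddHaarMeasure_hausdorffMeasure_orthogonal_singleton {v : E} (hv : v ≠ 0) :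
    (μH[(finrank ℝ E : ℝ) - 1] : Measure (Submodule.span ℝ {v})ᗮ).IsAddHaarMeasure := by
  have hdim : (finrank ℝ E : ℝ) - 1 = finrank ℝ (Submodule.span ℝ {v})ᗮ := by
    rw [sub_eq_iff_eq_add', ← (Submodule.span ℝ {v}).finrank_add_finrank_orthogonal,
      finrank_span_singleton hv, Nat.cast_add, Nat.cast_one]
  rw [hdim]
  infer_instance

variable [Nontrivial E]

lemma hausdorffMeasure_hemisphere_lt_top {v : E} (hv : ‖v‖ = 1) :
    μH[(finrank ℝ E : ℝ) - 1] (sphere (0 : E) 1 ∩ {x | inner ℝ v x ≤ 0}) < ⊤ := by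
  have := isAddHaarMeasure_hausdorffMeasure_orthogonal_singleton (norm_ne_zero_iff.mp
    (hv.trans_ne one_ne_zero))
  have hlip : LocallyLipschitz fun w : (Submodule.span ℝ {v})ᗮ ↦ stereoInvFunAux v w := by
    apply ContDiff.locallyLipschitz (𝕂 := ℝ)
    exact (contDiff_stereoInvFunAux (m := 1)).comp (Submodule.span ℝ {v})ᗮ.subtypeL.contDiff
  obtain ⟨L, hL⟩ := hlip.locallyLipschitzOn.exists_lipschitzOnWith_of_compact
    (isCompact_closedBall 0 2)
  refine (measure_mono (hemisphere_subset_stereoInvFunAux_image_closedBall hv)).trans_lt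
    ((hL.hausdorffMeasure_image_le finrank_sub_one_nonneg).trans_lt ?_)
  exact ENNReal.mul_lt_top (ENNReal.rpow_lt_top_of_nonneg finrank_sub_one_nonneg
    ENNReal.coe_ne_top) (isCompact_closedBall _ _).measure_lt_top

instance : IsFiniteMeasure (surfaceMeasure E) := by
  obtain ⟨v, hv⟩ := exists_norm_eq E zero_le_one
  have hcover : sphere (0 : E) 1 ⊆
      sphere 0 1 ∩ {x | inner ℝ v x ≤ 0} ∪ sphere 0 1 ∩ {x | inner ℝ (-v) x ≤ 0} := by
    intro x hx
    rcases le_total (inner ℝ v x) 0 with h | h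
    · exact .inl ⟨hx, h⟩
    · exact .inr ⟨hx, by simpa using h⟩
  refine ⟨?_⟩
  rw [surfaceMeasure, Measure.restrict_apply_univ]
  exact (measure_mono hcover).trans_lt (measure_union_lt_top
    (hausdorffMeasure_hemisphere_lt_top hv)
    (hausdorffMeasure_hemisphere_lt_top ((norm_neg v).trans hv)))

variable (E) in
lemma surfaceMeasure_ne_zero : surfaceMeasure E ≠ 0 := by
  obtain ⟨v, hv⟩ := exists_norm_eq E zero_le_one
  have := isAddHaarMeasure_hausdorffMeasure_orthogonal_singleton (norm_ne_zero_iff.mp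
    (hv.trans_ne one_ne_zero))
  refine (Measure.measure_univ_pos.mp ?_)
  calc
    0 < μH[(finrank ℝ E : ℝ) - 1] (ball (0 : (Submodule.span ℝ {v})ᗮ) 1) :=
      measure_ball_pos _ _ one_pos
    _ ≤ μH[(finrank ℝ E : ℝ) - 1]
          ((Submodule.span ℝ {v})ᗮ.orthogonalProjectionOnto '' sphere 0 1) :=
      measure_mono (ball_subset_orthogonalProjectionOnto_image_sphere hv)
    _ ≤ μH[(finrank ℝ E : ℝ) - 1] (sphere (0 : E) 1) :=
      hausdorffMeasure_orthogonalProjectionOnto_le _ _ _ finrank_sub_one_nonneg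
    _ = surfaceMeasure E univ := (Measure.restrict_apply_univ _).symm

end SphereMeasures

section MomentDeterminacy

open scoped Polynomial

variable {F : Type*} [NormedAddCommGroup F] [NormedSpace ℝ F] {μ : Measure ℝ} {a b : ℝ}
  {G : ℝ → F}

lemma integrable_smul_of_ae_mem_Icc (hμ : ∀ᵐ x ∂μ, x ∈ Icc a b) (hG : Integrable G μ)
    {g : ℝ → ℝ} (hg : Continuous g) : Integrable (fun x ↦ g x • G x) μ := by
  obtain ⟨C, hC⟩ := isCompact_Icc.exists_bound_of_continuousOn (s := Icc a b) hg.continuousOn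
  exact hG.bdd_smul C hg.aestronglyMeasurable (hμ.mono hC)

lemma integral_polynomial_smul_eq_zero_of_forall_pow (hμ : ∀ᵐ x ∂μ, x ∈ Icc a b)
    (hG : Integrable G μ) (hmom : ∀ n : ℕ, ∫ x, x ^ n • G x ∂μ = 0) (p : ℝ[X]) :
    ∫ x, p.eval x • G x ∂μ = 0 := by
  simp only [Polynomial.eval_eq_sum_range, Finset.sum_smul, mul_smul]
  have hint (n : ℕ) : Integrable (fun x ↦ p.coeff n • x ^ n • G x) μ :=
    (integrable_smul_of_ae_mem_Icc hμ hG (continuous_pow n)).smul (p.coeff n)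
  rw [integral_finsetSum _ fun n _ ↦ hint n]
  simp only [integral_smul, hmom, smul_zero, Finset.sum_const_zero]

lemma integral_smul_eq_zero_of_forall_pow (hμ : ∀ᵐ x ∂μ, x ∈ Icc a b) (hG : Integrable G μ)
    (hmom : ∀ n : ℕ, ∫ x, x ^ n • G x ∂μ = 0) {g : ℝ → ℝ} (hg : Continuous g) :
    ∫ x, g x • G x ∂μ = 0 := by
  refine norm_le_zero_iff.mp (le_of_forall_pos_le_add fun ε hε ↦ ?_)
  have hM : 0 < (∫ x, ‖G x‖ ∂μ) + 1 :=
    add_pos_of_nonneg_of_pos (integral_nonneg fun _ ↦ norm_nonneg _) one_pos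
  obtain ⟨p, hp⟩ := exists_polynomial_near_of_continuousOn a b g hg.continuousOn
    (ε / ((∫ x, ‖G x‖ ∂μ) + 1)) (div_pos hε hM)
  calc
    ‖∫ x, g x • G x ∂μ‖ = ‖∫ x, (g x - p.eval x) • G x ∂μ‖ := by
      simp only [sub_smul]
      rw [integral_sub (integrable_smul_of_ae_mem_Icc hμ hG hg)
        (integrable_smul_of_ae_mem_Icc hμ hG p.continuous),
        integral_polynomial_smul_eq_zero_of_forall_pow hμ hG hmom, sub_zero]
    _ ≤ ∫ x, ε / ((∫ x, ‖G x‖ ∂μ) + 1) * ‖G x‖ ∂μ := by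
      refine norm_integral_le_of_norm_le (hG.norm.const_mul _) ?_
      filter_upwards [hμ] with x hx
      rw [norm_smul, Real.norm_eq_abs, abs_sub_comm]
      gcongr
      exact (hp x hx).le
    _ ≤ 0 + ε := by
      rw [integral_const_mul, zero_add, div_mul_eq_mul_div, div_le_iff₀ hM]
      nlinarith

variable [CompleteSpace F]

lemma ae_eq_zero_of_integral_pow_smul_eq_zero (hμ : ∀ᵐ x ∂μ, x ∈ Icc a b) (hG : Integrable G μ)
    (hmom : ∀ n : ℕ, ∫ x, x ^ n • G x ∂μ = 0) : ∀ᵐ x ∂μ, G x = 0 :=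
  ae_eq_zero_of_integral_contDiff_smul_eq_zero hG.locallyIntegrable fun _ hg _ ↦
    integral_smul_eq_zero_of_forall_pow hμ hG hmom hg.continuous

variable {X : Type*} [MeasurableSpace X] {ν : Measure X} (e : X ≃ᵐ ℝ) {H : X → F}

lemma ae_eq_zero_of_integral_measurableEquiv_pow_smul_eq_zero (hν : ∀ᵐ x ∂ν, e x ∈ Icc a b)
    (hH : Integrable H ν) (hmom : ∀ n : ℕ, ∫ x, e x ^ n • H x ∂ν = 0) :
    ∀ᵐ x ∂ν, H x = 0 := by
  have hzero : ∀ᵐ t ∂ν.map e, H (e.symm t) = 0 := by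
    refine ae_eq_zero_of_integral_pow_smul_eq_zero (a := a) (b := b) ?_ ?_ fun n ↦ ?_
    · exact (ae_map_iff e.measurable.aemeasurable measurableSet_Icc).mpr hν
    · rw [integrable_map_equiv e]
      simpa [Function.comp_def] using hH
    · simpa [integral_map_equiv] using hmom n
  filter_upwards [ae_of_ae_map e.measurable.aemeasurable hzero] with x hx
  rwa [e.symm_apply_apply] at hx

lemma ae_restrict_eq_zero_of_setIntegral_pow_smul_eq_zero {s t : Set X} (hs : MeasurableSet s)
    (ht : MeasurableSet t) (hst : s ⊆ t) (hbound : ∀ x ∈ s, e x ∈ Icc a b)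
    (hH : IntegrableOn H s ν) (hsupp : ∀ x ∈ t \ s, H x = 0)
    (hmom : ∀ n : ℕ, ∫ x in t, e x ^ n • H x ∂ν = 0) : ∀ᵐ x ∂ν.restrict t, H x = 0 := by
  have hzero : ∀ᵐ x ∂ν.restrict s, H x = 0 := by
    refine ae_eq_zero_of_integral_measurableEquiv_pow_smul_eq_zero e
      ((ae_restrict_mem hs).mono hbound) hH fun n ↦ ?_
    rw [← hmom n]
    exact (setIntegral_eq_of_subset_of_forall_sdiff_eq_zero ht hst
      fun x hx ↦ by rw [hsupp x hx, smul_zero]).symm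
  filter_upwards [ae_restrict_of_ae ((ae_restrict_iff' hs).mp hzero), ae_restrict_mem ht]
    with x hx hxt
  by_cases hxs : x ∈ s
  · exact hx hxs
  · exact hsupp x ⟨hxt, hxs⟩

end MomentDeterminacy

section SphericalMoment

variable {E : Type*} [NormedAddCommGroup E] [InnerProductSpace ℝ E] [MeasurableSpace E]

/-- The first moment `∫ χ_A(r v) v dσ(v)` of the part of the sphere of radius `r` lying in `A`; the
balance law says that it vanishes for almost every `r`. -/
def sphericalMoment (σ : Measure E) (A : Set E) (r : ℝ) : E :=
  ∫ v, (A.indicator (fun _ ↦ (1 : ℝ)) (r • v)) • v ∂σ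

variable {σ : Measure E} {A : Set E}

lemma sphericalMoment_eq_zero_of_disjoint_sphere (hσ : IsUniformOnSphere σ) {r : ℝ}
    (h : Disjoint A (sphere 0 |r|)) : sphericalMoment σ A r = 0 := by
  refine integral_eq_zero_of_ae ?_
  filter_upwards [hσ.ae_norm_eq_one] with v hv
  have hrv : r • v ∈ sphere 0 |r| := by
    rw [mem_sphere_zero_iff_norm, norm_smul, hv, mul_one, Real.norm_eq_abs]
  rw [indicator_of_notMem (h.notMem_of_mem_right hrv), zero_smul, Pi.zero_apply]

lemma sphericalMoment_eq_zero_of_subset_closedBall (hσ : IsUniformOnSphere σ) {R r : ℝ}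
    (hAR : A ⊆ closedBall 0 R) (hr : R < r) : sphericalMoment σ A r = 0 :=
  sphericalMoment_eq_zero_of_disjoint_sphere hσ <| disjoint_left.mpr fun _ hy hyr ↦
    (hr.trans_le (le_abs_self r)).not_ge <|
      (mem_sphere_zero_iff_norm.mp hyr).ge.trans (mem_closedBall_zero_iff.mp (hAR hy))

lemma sphericalMoment_eq_zero_of_subset_compl_ball (hσ : IsUniformOnSphere σ) {ε r : ℝ}
    (hAε : A ⊆ (ball 0 ε)ᶜ) (hr₀ : 0 ≤ r) (hr : r < ε) : sphericalMoment σ A r = 0 :=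
  sphericalMoment_eq_zero_of_disjoint_sphere hσ <| disjoint_left.mpr fun _ hy hyr ↦
    hAε hy <| mem_ball_zero_iff.mpr <| by
      rwa [mem_sphere_zero_iff_norm.mp hyr, abs_of_nonneg hr₀]

variable [IsFiniteMeasure σ]

lemma norm_sphericalMoment_le (hσ : IsUniformOnSphere σ) (A : Set E) (r : ℝ) :
    ‖sphericalMoment σ A r‖ ≤ σ.real univ := by
  rw [← one_mul (σ.real univ)]
  refine norm_integral_le_of_norm_le_const ?_
  filter_upwards [hσ.ae_norm_eq_one] with v hv
  rw [norm_smul, hv, mul_one]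
  exact (norm_indicator_le_norm_self _ _).trans_eq norm_one

variable [BorelSpace E] [SecondCountableTopology E]

lemma measurable_indicator_smul_smul (hA : MeasurableSet A) :
    Measurable fun p : ℝ × E ↦ (A.indicator (fun _ ↦ (1 : ℝ)) (p.1 • p.2)) • p.2 :=
  ((measurable_const.indicator hA).comp (measurable_fst.smul measurable_snd)).smul measurable_snd

lemma stronglyMeasurable_sphericalMoment (hA : MeasurableSet A) :
    StronglyMeasurable (sphericalMoment σ A) :=
  (measurable_indicator_smul_smul hA).stronglyMeasurable.integral_prod_right

lemma sphericalMoment_compl (hσ : IsUniformOnSphere σ) (hA : MeasurableSet A) (r : ℝ) :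
    sphericalMoment σ Aᶜ r = -sphericalMoment σ A r := by
  have hint {B : Set E} (hB : MeasurableSet B) :
      Integrable (fun v ↦ (B.indicator (fun _ ↦ (1 : ℝ)) (r • v)) • v) σ := by
    refine .of_bound (C := 1)
      ((measurable_indicator_smul_smul hB).comp measurable_prodMk_left).aestronglyMeasurable ?_
    filter_upwards [hσ.ae_norm_eq_one] with v hv
    rw [norm_smul, hv, mul_one]
    exact (norm_indicator_le_norm_self _ _).trans_eq norm_one
  rw [eq_neg_iff_add_eq_zero, sphericalMoment, sphericalMoment,
    ← integral_add (hint hA.compl) (hint hA), ← hσ.integral_id_eq_zero]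
  simp only [← add_smul, indicator_compl_add_self_apply, one_smul]

lemma integrable_smul_sphericalMoment (hσ : IsUniformOnSphere σ) (hA : MeasurableSet A)
    {μ : Measure ℝ} {w : ℝ → ℝ} (hw : Integrable w μ) :
    Integrable (fun r ↦ w r • sphericalMoment σ A r) μ :=
  hw.smul_bdd _ (stronglyMeasurable_sphericalMoment hA).aestronglyMeasurable
    (.of_forall (norm_sphericalMoment_le hσ A))

end SphericalMoment

section Polar

open Module

variable {E : Type*} [NormedAddCommGroup E] [InnerProductSpace ℝ E] [FiniteDimensional ℝ E]
  [MeasurableSpace E] [BorelSpace E] [Nontrivial E]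

lemma integral_volumeIoiPow {F : Type*} [NormedAddCommGroup F] [NormedSpace ℝ F] (n : ℕ)
    (g : ℝ → F) : ∫ r : Ioi (0 : ℝ), g r ∂Measure.volumeIoiPow n = ∫ r in Ioi 0, r ^ n • g r := by
  have hmeas : Measurable fun r : Ioi (0 : ℝ) ↦ (r.1 ^ n).toNNReal :=
    (measurable_subtype_coe.pow_const n).real_toNNReal
  simp only [Measure.volumeIoiPow, ENNReal.ofReal]
  rw [integral_withDensity_eq_integral_smul hmeas,
    integral_subtype_comap measurableSet_Ioi fun r ↦ (r ^ n).toNNReal • g r]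
  refine setIntegral_congr_fun measurableSet_Ioi fun r hr ↦ ?_
  rw [NNReal.smul_def, Real.coe_toNNReal _ (pow_nonneg (mem_Ioi.mp hr).le n)]

lemma integral_eq_integral_Ioi_coneMeasure {F : Type*} [NormedAddCommGroup F] [NormedSpace ℝ F]
    {f : E → F} (hf : Integrable f) :
    ∫ x, f x = ∫ r in Ioi (0 : ℝ), r ^ (finrank ℝ E - 1) • ∫ v, f (r • v) ∂coneMeasure E := by
  have hmp := (volume : Measure E).measurePreserving_homeomorphUnitSphereProd
  have hemb := (homeomorphUnitSphereProd E).measurableEmbedding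
  have h0 : MeasurableSet ({0}ᶜ : Set E) := (measurableSet_singleton 0).compl
  let g : sphere (0 : E) 1 × Ioi (0 : ℝ) → F := fun p ↦ f (p.2.1 • (p.1 : E))
  have hcomp : g ∘ homeomorphUnitSphereProd E = f ∘ ((↑) : ({0}ᶜ : Set E) → E) := by
    funext x
    have hx : ‖(x : E)‖ ≠ 0 := norm_ne_zero_iff.mpr x.2
    simp [g, smul_smul, hx]
  have hg : Integrable g
      ((volume : Measure E).toSphere.prod (Measure.volumeIoiPow (finrank ℝ E - 1))) := by
    rw [← hmp.integrable_comp_emb hemb, hcomp, ← integrableOn_iff_comap_subtypeVal h0]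
    exact hf.integrableOn
  calc
    ∫ x, f x = ∫ x : ({0}ᶜ : Set E), (g ∘ homeomorphUnitSphereProd E) x
          ∂(volume : Measure E).comap Subtype.val := by
      rw [hcomp]
      exact ((integral_subtype_comap h0 f).trans (by rw [restrict_compl_singleton])).symm
    _ = ∫ r : Ioi (0 : ℝ), ∫ v, g (v, r) ∂(volume : Measure E).toSphere
          ∂Measure.volumeIoiPow (finrank ℝ E - 1) := by
      rw [← integral_prod_symm _ hg]
      exact hmp.integral_comp hemb g
    _ = ∫ r in Ioi (0 : ℝ), r ^ (finrank ℝ E - 1) • ∫ v, f (r • v) ∂coneMeasure E := by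
      simp only [integral_coneMeasure]
      exact integral_volumeIoiPow _ fun r ↦
        ∫ v : sphere (0 : E) 1, f (r • (v : E)) ∂(volume : Measure E).toSphere

lemma pow_mul_rpow_sub_mul_self {d : ℕ} (hd : 0 < d) {r : ℝ} (hr : 0 < r) (α : ℝ) :
    r ^ (d - 1) * (r ^ (α - d - 2) * r) = r ^ (α - 2) := by
  rw [← Real.rpow_natCast, Nat.cast_pred hd]
  nth_rewrite 3 [← Real.rpow_one r]
  rw [← Real.rpow_add hr, ← Real.rpow_add hr]
  congr 1
  ring

lemma setIntegral_norm_rpow_smul {A : Set E} (hA : MeasurableSet A) {α : ℝ}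
    (hint : IntegrableOn (fun y : E ↦ ‖y‖ ^ (α - finrank ℝ E - 2) • y) A) :
    ∫ y in A, ‖y‖ ^ (α - finrank ℝ E - 2) • y =
      ∫ r in Ioi (0 : ℝ), r ^ (α - 2) • sphericalMoment (coneMeasure E) A r := by
  rw [← integral_indicator hA, integral_eq_integral_Ioi_coneMeasure (hint.integrable_indicator hA)]
  refine setIntegral_congr_fun measurableSet_Ioi fun r (hr : 0 < r) ↦ ?_
  have hinner : ∫ v, A.indicator (fun y ↦ ‖y‖ ^ (α - finrank ℝ E - 2) • y) (r • v) ∂coneMeasure E =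
      (r ^ (α - finrank ℝ E - 2) * r) • sphericalMoment (coneMeasure E) A r := by
    rw [sphericalMoment, ← integral_smul]
    refine integral_congr_ae ?_
    filter_upwards [isUniformOnSphere_coneMeasure.ae_norm_eq_one] with v hv
    by_cases h : r • v ∈ A
    · simp [h, norm_smul, hv, abs_of_pos hr, smul_smul]
    · simp [h]
  simp only [hinner, smul_smul, pow_mul_rpow_sub_mul_self (finrank_pos (R := ℝ) (M := E)) hr]

lemma integrableOn_norm_rpow_smul_preimage_norm_iff {s : Set ℝ} (hs : MeasurableSet s) {α : ℝ} :
    IntegrableOn (fun y : E ↦ ‖y‖ ^ (α - finrank ℝ E - 2) • y) (norm ⁻¹' s) ↔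
      IntegrableOn (fun r : ℝ ↦ r ^ (α - 2)) (Ioi 0 ∩ s) := by
  have hmeas : Measurable fun y : E ↦ ‖y‖ ^ (α - finrank ℝ E - 2) • y :=
    (measurable_norm.pow_const _).smul measurable_id
  have hnorm (y : E) : (norm ⁻¹' s).indicator (fun y ↦ ‖‖y‖ ^ (α - finrank ℝ E - 2) • y‖) y =
      s.indicator (fun r ↦ r ^ (α - finrank ℝ E - 2) * r) ‖y‖ := by
    by_cases hy : ‖y‖ ∈ s
    · simp [hy, norm_smul, abs_of_nonneg (Real.rpow_nonneg (norm_nonneg y) _)]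
    · simp [hy]
  have hradial (r : ℝ) (hr : r ∈ Ioi 0) :
      r ^ (finrank ℝ E - 1) • s.indicator (fun r ↦ r ^ (α - finrank ℝ E - 2) * r) r =
        s.indicator (fun r ↦ r ^ (α - 2)) r := by
    by_cases h : r ∈ s
    · simpa [h] using pow_mul_rpow_sub_mul_self (finrank_pos (R := ℝ) (M := E)) hr α
    · simp [h]
  rw [IntegrableOn, ← integrable_norm_iff hmeas.aestronglyMeasurable, ← IntegrableOn,
    ← integrable_indicator_iff (measurable_norm hs), integrable_congr (.of_forall hnorm),
    integrable_fun_norm_addHaar, integrableOn_congr_fun hradial measurableSet_Ioi,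
    integrableOn_indicator_iff hs, inter_comm]

lemma integrableOn_norm_rpow_smul_closedBall {α : ℝ} (hα : 1 < α) (R : ℝ) :
    IntegrableOn (fun y : E ↦ ‖y‖ ^ (α - finrank ℝ E - 2) • y) (closedBall 0 R) := by
  have hball : closedBall (0 : E) R = norm ⁻¹' Iic R := Set.ext fun _ ↦ mem_closedBall_zero_iff
  rw [hball, integrableOn_norm_rpow_smul_preimage_norm_iff measurableSet_Iic, Ioi_inter_Iic]
  exact (intervalIntegral.intervalIntegrable_rpow' (by linarith)).1

lemma integrableOn_Ici_rpow_of_lt {a : ℝ} (ha : a < -1) {c : ℝ} (hc : 0 < c) :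
    IntegrableOn (fun r : ℝ ↦ r ^ a) (Ici c) := by
  rw [integrableOn_Ici_iff_integrableOn_Ioi]
  exact integrableOn_Ioi_rpow_of_lt ha hc

lemma integrableOn_norm_rpow_smul_compl_ball {α : ℝ} (hα : α < 1) {ε : ℝ} (hε : 0 < ε) :
    IntegrableOn (fun y : E ↦ ‖y‖ ^ (α - finrank ℝ E - 2) • y) (ball 0 ε)ᶜ := by
  have hball : (ball (0 : E) ε)ᶜ = norm ⁻¹' Ici ε := by
    ext
    simp
  rw [hball, integrableOn_norm_rpow_smul_preimage_norm_iff measurableSet_Ici]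
  exact (integrableOn_Ici_rpow_of_lt (by linarith) hε).mono_set inter_subset_right

variable {A : Set E}

lemma forall_setIntegral_eq_zero_iff_of_subset_closedBall (hA : MeasurableSet A) {R : ℝ}
    (hAR : A ⊆ closedBall 0 R) :
    (∀ α : ℝ, 1 < α → ∫ y in A, ‖y‖ ^ (α - finrank ℝ E - 2) • y = 0) ↔
      ∀ᵐ r ∂volume.restrict (Ioi (0 : ℝ)), sphericalMoment (coneMeasure E) A r = 0 := by
  have hpolar {α : ℝ} (hα : 1 < α) := setIntegral_norm_rpow_smul hA
    ((integrableOn_norm_rpow_smul_closedBall hα R).mono_set hAR)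
  refine ⟨fun h ↦ ?_, fun h α hα ↦ ?_⟩
  · refine ae_restrict_eq_zero_of_setIntegral_pow_smul_eq_zero (.refl ℝ) measurableSet_Ioc
      measurableSet_Ioi Ioc_subset_Ioi_self (a := 0) (b := R) (fun r hr ↦ Ioc_subset_Icc_self hr)
      ?_ (fun r hr ↦ ?_) fun n ↦ ?_
    · simpa [IntegrableOn] using integrable_smul_sphericalMoment isUniformOnSphere_coneMeasure hA
        (integrable_const (μ := volume.restrict (Ioc 0 R)) (1 : ℝ))
    · exact sphericalMoment_eq_zero_of_subset_closedBall isUniformOnSphere_coneMeasure hAR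
        (not_le.mp fun hrR ↦ hr.2 ⟨hr.1, hrR⟩)
    · have hα : (1 : ℝ) < n + 2 := by linarith [n.cast_nonneg (α := ℝ)]
      rw [← h _ hα, hpolar hα]
      simp only [add_sub_cancel_right, Real.rpow_natCast, MeasurableEquiv.refl_apply]
  · rw [hpolar hα]
    exact integral_eq_zero_of_ae (h.mono fun r hr ↦ by simp [hr])

lemma forall_setIntegral_eq_zero_iff_of_subset_compl_ball (hA : MeasurableSet A) {ε : ℝ}
    (hε : 0 < ε) (hAε : A ⊆ (ball 0 ε)ᶜ) :
    (∀ α : ℝ, α < 0 → ∫ y in A, ‖y‖ ^ (α - finrank ℝ E - 2) • y = 0) ↔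
      ∀ᵐ r ∂volume.restrict (Ioi (0 : ℝ)), sphericalMoment (coneMeasure E) A r = 0 := by
  have hpolar {α : ℝ} (hα : α < 0) := setIntegral_norm_rpow_smul hA
    ((integrableOn_norm_rpow_smul_compl_ball (hα.trans one_pos) hε).mono_set hAε)
  refine ⟨fun h ↦ ?_, fun h α hα ↦ ?_⟩
  · have hzero : ∀ᵐ r ∂volume.restrict (Ioi (0 : ℝ)),
        r ^ (-3 : ℝ) • sphericalMoment (coneMeasure E) A r = 0 := by
      refine ae_restrict_eq_zero_of_setIntegral_pow_smul_eq_zero (MeasurableEquiv.inv ℝ)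
        measurableSet_Ici measurableSet_Ioi (Ici_subset_Ioi.mpr hε) (a := 0) (b := ε⁻¹)
        (fun r (hr : ε ≤ r) ↦ ⟨inv_nonneg.mpr (hε.le.trans hr), inv_anti₀ hε hr⟩)
        ?_ (fun r hr ↦ ?_) fun n ↦ ?_
      · exact integrable_smul_sphericalMoment isUniformOnSphere_coneMeasure hA
          (integrableOn_Ici_rpow_of_lt (by norm_num) hε)
      · rw [sphericalMoment_eq_zero_of_subset_compl_ball isUniformOnSphere_coneMeasure hAε
          (le_of_lt hr.1) (not_le.mp hr.2), smul_zero]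
      · have hα : -(n : ℝ) - 1 < 0 := by linarith [n.cast_nonneg (α := ℝ)]
        rw [← h _ hα, hpolar hα]
        refine setIntegral_congr_fun measurableSet_Ioi fun r (hr : 0 < r) ↦ ?_
        have hexp : -(n : ℝ) - 1 - 2 = -n + -3 := by ring
        simp only [MeasurableEquiv.inv_apply, smul_smul, hexp, Real.rpow_add hr,
          Real.rpow_neg hr.le, Real.rpow_natCast, inv_pow]
    filter_upwards [hzero, ae_restrict_mem measurableSet_Ioi] with r hr hr₀
    exact (smul_eq_zero.mp hr).resolve_left (Real.rpow_pos_of_pos hr₀ _).ne'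
  · rw [hpolar hα]
    exact integral_eq_zero_of_ae (h.mono fun r hr ↦ by simp [hr])

end Polar

section BalanceLaw

open Module

lemma satisfiesBalanceLaw_iff_ae_sphericalMoment_eq_zero {m : ℕ} [NeZero m]
    {Ω : Set (EuclideanSpace ℝ (Fin m))} :
    SatisfiesBalanceLaw Ω ↔ ∀ᵐ r ∂volume.restrict (Ioi (0 : ℝ)),
      sphericalMoment (coneMeasure (EuclideanSpace ℝ (Fin m))) Ω r = 0 := by
  rw [SatisfiesBalanceLaw, ← restrict_Ioi_eq_restrict_Ici]
  refine Filter.eventually_congr (.of_forall fun r ↦ ?_)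
  rw [sphericalMoment, ← isUniformOnSphere_surfaceMeasure.integral_eq_zero_iff
    isUniformOnSphere_coneMeasure (surfaceMeasure_ne_zero _) (coneMeasure_ne_zero _),
    surfaceMeasure, finrank_euclideanSpace_fin]

end BalanceLaw

theorem stmt1_general {m : ℕ} (hm : 1 ≤ m) {Ω : Set (EuclideanSpace ℝ (Fin m))}
    (hΩ : MeasurableSet Ω) (hb : Bornology.IsBounded Ω) (h0 : 0 ∈ interior Ω) :
    List.TFAE [∀ α : ℝ, 1 < α → ∫ y in Ω, ‖y‖ ^ (α - m - 2) • y = 0,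
      ∀ α : ℝ, α < 0 → ∫ y in Ωᶜ, ‖y‖ ^ (α - m - 2) • y = 0,
      SatisfiesBalanceLaw Ω] := by
  have : NeZero m := ⟨Nat.one_le_iff_ne_zero.mp hm⟩
  obtain ⟨R, hR⟩ := hb.subset_closedBall 0
  obtain ⟨ε, hε, hball⟩ := Metric.mem_nhds_iff.mp (mem_interior_iff_mem_nhds.mp h0)
  have hinside := forall_setIntegral_eq_zero_iff_of_subset_closedBall hΩ hR
  have houtside := forall_setIntegral_eq_zero_iff_of_subset_compl_ball hΩ.compl hε
    (compl_subset_compl.mpr hball)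
  simp only [sphericalMoment_compl isUniformOnSphere_coneMeasure hΩ, neg_eq_zero] at houtside
  rw [finrank_euclideanSpace_fin, ← satisfiesBalanceLaw_iff_ae_sphericalMoment_eq_zero]
    at hinside houtside
  tfae_have 1 ↔ 3 := hinside
  tfae_have 2 ↔ 3 := houtside
  tfae_finish

theorem stmt1 {m : ℕ} (hm : 1 ≤ m) (Ω : Set (EuclideanSpace ℝ (Fin m)))
    (hΩ : IsBody Ω) (h0 : (0 : EuclideanSpace ℝ (Fin m)) ∈ interior Ω) :
    ((∀ α : ℝ, 1 < α →
        (∫ y in Ω, (‖y‖ ^ (α - m - 2) : ℝ) • y) = 0) ∧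
     (∀ α : ℝ, α < 0 →
        (∫ y in Ωᶜ, (‖y‖ ^ (α - m - 2) : ℝ) • y) = 0)) ↔
    SatisfiesBalanceLaw Ω := by
  obtain ⟨U, -, hU, rfl⟩ := hΩ
  have h := stmt1_general hm isClosed_closure.measurableSet hU.closure h0
  exact ⟨fun hi ↦ (h.out 0 2).mp hi.1, fun hb ↦ ⟨(h.out 0 2).mpr hb, (h.out 1 2).mpr hb⟩⟩
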